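/- arXiv:1703.01066 — 6 statements merged into one kernel-verified Lean document; each statement's English description precedes it below -/
import Mathlib

section
/- Fix R₁, R₂ with 0 < R₁ < R₂ < 1 and let ρ(t) = sinh(t)·e^{−t} for t ≥ 0. Define f(t) = exp(−R₁²/(2ρ(t))) − exp(−R₂²/(2ρ(t))) for t > 0. Then f(t) > 0 for every t > 0, f(t) → 0 as t → 0⁺, and there exists t* > 0 such that f is monotone decreasing (antitone) on [t*, ∞). -/
open Real Filter Set

/-!
The squared radius of the process at time `t` is exponentially distributed with rate
`s = 1 / (2 * ρ t)`, so `f t` is the mass `exp (-R₁² * s) - exp (-R₂² * s)` which that law gives to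
`[R₁², R₂²)`. The rate decreases from `∞` to `1` as `t` runs through `(0, ∞)`. The mass vanishes
as `s → ∞`, and it increases with `s` as long as `R₁² * exp (-R₁² * s) ≤ R₂² * exp (-R₂² * s)`. If
this holds strictly at `s = 1`, then it holds at the rate of some time `tstar`, hence at all smaller
rates. Radii below `1` satisfy it because `x * exp (-x)` increases on `(-∞, 1]`.
-/

/-- The mass of `[a, b)` under the exponential law of rate `s`, for `0 ≤ a ≤ b` and `0 < s`. -/
noncomputable def expIntervalMass (a b s : ℝ) : ℝ :=
  exp (-a * s) - exp (-b * s)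

/-- The rate `1 / (2 * ρ t)`, where `ρ t = sinh t * exp (-t)`, of the exponential law of the squared
radius of the process at time `t > 0`. -/
noncomputable def radialRate (t : ℝ) : ℝ :=
  (2 * (sinh t * exp (-t)))⁻¹

section ExpIntervalMass

variable {a b : ℝ}

lemma expIntervalMass_pos {s : ℝ} (hab : a < b) (hs : 0 < s) : 0 < expIntervalMass a b s :=
  sub_pos.2 (exp_lt_exp.2 (mul_lt_mul_of_pos_right (neg_lt_neg hab) hs))

lemma tendsto_expIntervalMass_atTop (ha : 0 < a) (hb : 0 < b) :
    Tendsto (expIntervalMass a b) atTop (nhds 0) := by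
  have exp_decay {c : ℝ} (hc : 0 < c) : Tendsto (fun s ↦ exp (-c * s)) atTop (nhds 0) :=
    tendsto_exp_atBot.comp (tendsto_id.const_mul_atTop_of_neg (neg_neg_of_pos hc))
  simpa only [sub_zero] using! (exp_decay ha).sub (exp_decay hb)

lemma hasDerivAt_expIntervalMass (a b s : ℝ) :
    HasDerivAt (expIntervalMass a b) (b * exp (-b * s) - a * exp (-a * s)) s := by
  have hasDerivAt_exp_neg_mul (c : ℝ) :
      HasDerivAt (fun s ↦ exp (-c * s)) (exp (-c * s) * (-c)) s := by
    simpa only [mul_one] using ((hasDerivAt_id' s).const_mul (-c)).exp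
  exact ((hasDerivAt_exp_neg_mul a).sub (hasDerivAt_exp_neg_mul b)).congr_deriv (by ring)

lemma mul_exp_neg_mul_le_of_le {s s₀ : ℝ} (hab : a ≤ b) (hb : 0 ≤ b)
    (h₀ : a * exp (-a * s₀) ≤ b * exp (-b * s₀)) (hs : s ≤ s₀) :
    a * exp (-a * s) ≤ b * exp (-b * s) := by
  have exp_shift (c : ℝ) : exp (-c * s) = exp (-c * s₀) * exp (c * (s₀ - s)) := by
    rw [← exp_add]
    ring_nf
  calc a * exp (-a * s) = a * exp (-a * s₀) * exp (a * (s₀ - s)) := by rw [exp_shift, mul_assoc]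
    _ ≤ b * exp (-b * s₀) * exp (a * (s₀ - s)) := by gcongr
    _ ≤ b * exp (-b * s₀) * exp (b * (s₀ - s)) := by
      have := sub_nonneg.2 hs
      gcongr
    _ = b * exp (-b * s) := by rw [exp_shift, mul_assoc]

lemma monotoneOn_expIntervalMass_Iic {s₀ : ℝ} (hab : a ≤ b) (hb : 0 ≤ b)
    (h₀ : a * exp (-a * s₀) ≤ b * exp (-b * s₀)) :
    MonotoneOn (expIntervalMass a b) (Iic s₀) := by
  refine monotoneOn_of_hasDerivWithinAt_nonneg (convex_Iic s₀)
    (fun s _ ↦ (hasDerivAt_expIntervalMass a b s).continuousAt.continuousWithinAt)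
    (fun s _ ↦ (hasDerivAt_expIntervalMass a b s).hasDerivWithinAt) fun s hs ↦ ?_
  exact sub_nonneg.2 (mul_exp_neg_mul_le_of_le hab hb h₀ (interior_subset (s := Iic s₀) hs))

end ExpIntervalMass

lemma radialRate_eq_inv_one_sub_exp (t : ℝ) : radialRate t = (1 - exp (-(2 * t)))⁻¹ := by
  have exp_mul_exp_neg : exp t * exp (-t) = 1 := by rw [← exp_add, add_neg_cancel, exp_zero]
  have exp_neg_two_mul : exp (-(2 * t)) = exp (-t) * exp (-t) := by rw [← exp_add]; ring_nf
  rw [radialRate, sinh_eq, exp_neg_two_mul]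
  congr 1
  linear_combination exp_mul_exp_neg

lemma one_sub_exp_neg_two_mul_pos {t : ℝ} (ht : 0 < t) : 0 < 1 - exp (-(2 * t)) :=
  sub_pos.2 (exp_lt_one_iff.2 (by linarith))

lemma radialRate_pos {t : ℝ} (ht : 0 < t) : 0 < radialRate t := by
  rw [radialRate_eq_inv_one_sub_exp]
  exact inv_pos.2 (one_sub_exp_neg_two_mul_pos ht)

lemma antitoneOn_radialRate_Ioi : AntitoneOn radialRate (Ioi 0) := by
  intro t ht u _ htu
  simp only [radialRate_eq_inv_one_sub_exp]
  exact inv_anti₀ (one_sub_exp_neg_two_mul_pos ht) (by gcongr)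

lemma tendsto_radialRate_nhdsGT_zero : Tendsto radialRate (nhdsWithin 0 (Ioi 0)) atTop := by
  have denominator_tendsto :
      Tendsto (fun t : ℝ ↦ 1 - exp (-(2 * t))) (nhdsWithin 0 (Ioi 0)) (nhdsWithin 0 (Ioi 0)) := by
    refine tendsto_nhdsWithin_iff.2 ⟨?_, ?_⟩
    · exact (Continuous.tendsto' (by fun_prop) 0 0 (by simp)).mono_left nhdsWithin_le_nhds
    · filter_upwards [self_mem_nhdsWithin] with t ht using one_sub_exp_neg_two_mul_pos ht
  exact (tendsto_inv_nhdsGT_zero.comp denominator_tendsto).congr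
    fun t ↦ (radialRate_eq_inv_one_sub_exp t).symm

lemma tendsto_radialRate_atTop : Tendsto radialRate atTop (nhds 1) := by
  have exp_decay : Tendsto (fun t : ℝ ↦ exp (-(2 * t))) atTop (nhds 0) :=
    tendsto_exp_neg_atTop_nhds_zero.comp (tendsto_id.const_mul_atTop two_pos)
  have denominator_tendsto : Tendsto (fun t : ℝ ↦ 1 - exp (-(2 * t))) atTop (nhds 1) := by
    simpa only [sub_zero] using exp_decay.const_sub 1
  simpa only [← radialRate_eq_inv_one_sub_exp, inv_one] using denominator_tendsto.inv₀ one_ne_zero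

lemma exists_antitoneOn_expIntervalMass_radialRate {a b : ℝ} (hab : a ≤ b) (hb : 0 ≤ b)
    (h : a * exp (-a) < b * exp (-b)) :
    ∃ t₀ : ℝ, 0 < t₀ ∧ AntitoneOn (fun t ↦ expIntervalMass a b (radialRate t)) (Ici t₀) := by
  have eventually_near_one : ∀ᶠ s in nhds (1 : ℝ), a * exp (-a * s) < b * exp (-b * s) :=
    ContinuousAt.eventually_lt (by fun_prop) (by fun_prop) (by simpa only [mul_one] using h)
  obtain ⟨t₀, h₀, ht₀⟩ :=
    ((tendsto_radialRate_atTop.eventually eventually_near_one).and (eventually_gt_atTop 0)).exists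
  have rate_antitone : AntitoneOn radialRate (Ici t₀) :=
    antitoneOn_radialRate_Ioi.mono (Ici_subset_Ioi.2 ht₀)
  refine ⟨t₀, ht₀, (monotoneOn_expIntervalMass_Iic hab hb h₀.le).comp_AntitoneOn rate_antitone ?_⟩
  exact fun t ht ↦ rate_antitone self_mem_Ici ht ht

lemma strictMonoOn_mul_exp_neg_Iic : StrictMonoOn (fun x : ℝ ↦ x * exp (-x)) (Iic 1) := by
  have hasDerivAt_mul_exp_neg (x : ℝ) :
      HasDerivAt (fun x ↦ x * exp (-x)) ((1 - x) * exp (-x)) x :=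
    ((hasDerivAt_id' x).mul (hasDerivAt_id' x).fun_neg.exp).congr_deriv (by ring)
  refine strictMonoOn_of_hasDerivWithinAt_pos (convex_Iic 1) (by fun_prop)
    (fun x _ ↦ (hasDerivAt_mul_exp_neg x).hasDerivWithinAt) fun x hx ↦ ?_
  rw [interior_Iic, mem_Iio] at hx
  exact mul_pos (sub_pos.2 hx) (exp_pos _)

theorem stmt_1_general (R₁ R₂ : ℝ) (hR₁ : 0 < R₁) (hR₁₂ : R₁ < R₂)
    (hR : R₁ ^ 2 * exp (-R₁ ^ 2) < R₂ ^ 2 * exp (-R₂ ^ 2))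
    (ρ f : ℝ → ℝ)
    (hρ : ∀ t, ρ t = sinh t * exp (-t))
    (hf : ∀ t, f t = exp (-R₁ ^ 2 / (2 * ρ t)) - exp (-R₂ ^ 2 / (2 * ρ t))) :
    (∀ t : ℝ, 0 < t → 0 < f t) ∧
    Tendsto f (nhdsWithin 0 (Ioi 0)) (nhds 0) ∧
    ∃ tstar : ℝ, 0 < tstar ∧ AntitoneOn f (Ici tstar) := by
  have hsq : R₁ ^ 2 < R₂ ^ 2 := pow_lt_pow_left₀ hR₁₂ hR₁.le two_ne_zero
  have hsq₁ : 0 < R₁ ^ 2 := pow_pos hR₁ 2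
  have hsq₂ : 0 < R₂ ^ 2 := hsq₁.trans hsq
  obtain rfl : f = fun t ↦ expIntervalMass (R₁ ^ 2) (R₂ ^ 2) (radialRate t) := by
    funext t
    rw [hf, hρ, expIntervalMass, radialRate, div_eq_mul_inv, div_eq_mul_inv]
  exact ⟨fun t ht ↦ expIntervalMass_pos hsq (radialRate_pos ht),
    (tendsto_expIntervalMass_atTop hsq₁ hsq₂).comp tendsto_radialRate_nhdsGT_zero,
    exists_antitoneOn_expIntervalMass_radialRate hsq.le hsq₂.le hR⟩

theorem stmt_1 (R₁ R₂ : ℝ) (hR₁ : 0 < R₁) (hR₁₂ : R₁ < R₂) (hR₂ : R₂ < 1)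
    (ρ f : ℝ → ℝ)
    (hρ : ∀ t, ρ t = Real.sinh t * Real.exp (-t))
    (hf : ∀ t, f t = Real.exp (-R₁ ^ 2 / (2 * ρ t)) - Real.exp (-R₂ ^ 2 / (2 * ρ t))) :
    (∀ t : ℝ, 0 < t → 0 < f t) ∧
    Tendsto f (nhdsWithin 0 (Set.Ioi 0)) (nhds 0) ∧
    ∃ tstar : ℝ, 0 < tstar ∧ AntitoneOn f (Set.Ici tstar) :=
  stmt_1_general R₁ R₂ hR₁ hR₁₂
    (strictMonoOn_mul_exp_neg_Iic (pow_le_one₀ hR₁.le (hR₁₂.trans hR₂).le)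
      (pow_le_one₀ (hR₁.trans hR₁₂).le hR₂.le) (pow_lt_pow_left₀ hR₁₂ hR₁.le two_ne_zero)) ρ f hρ hf
end

section
/- Fix R₁, R₂ with 1 ≤ R₁ < R₂ and let ρ(t) = sinh(t)·e^{−t} for t ≥ 0. Define f(t) = exp(−R₁²/(2ρ(t))) − exp(−R₂²/(2ρ(t))) for t > 0. Then f(t) → 0 as t → 0⁺ and f is strictly monotone increasing on (0, ∞). -/
open Real Filter Set

/-!
With `x = 2 ρ(t) = 1 - exp (-2t)`, which increases from `0` towards `1`, and `a = R₁²`, `b = R₂²`,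
the function becomes `exp (-a / x) - exp (-b / x)`. As a function of `u = 1 / x` its derivative is
`b exp (-b u) - a exp (-a u)`, which is negative exactly when `u > log (b / a) / (b - a)`; so the
function increases for `x ≤ (b - a) / log (b / a)`, a range which contains `(0, 1)` as soon as
`log (b / a) ≤ b - a`. For `a ≥ 1` this is the inequality `log y ≤ y - 1` at `y = b / a`.
-/

open scoped Topology

section ExpDifference

variable {a b c : ℝ}

lemma mul_exp_neg_mul_lt_of_log_div_lt (ha : 0 < a) (hb : 0 < b) {u : ℝ}
    (hu : log (b / a) < (b - a) * u) : b * exp (-b * u) < a * exp (-a * u) := by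
  have hexp : b / a < exp ((b - a) * u) := (log_lt_iff_lt_exp (div_pos hb ha)).1 hu
  calc b * exp (-b * u) < a * exp ((b - a) * u) * exp (-b * u) := by
        gcongr
        exact (div_lt_iff₀' ha).1 hexp
    _ = a * exp (-a * u) := by rw [mul_assoc, ← exp_add]; ring_nf

lemma hasDerivAt_exp_neg_mul (c u : ℝ) :
    HasDerivAt (fun u ↦ exp (-c * u)) (-(c * exp (-c * u))) u := by
  simpa [mul_comm] using ((hasDerivAt_id u).const_mul (-c)).exp

lemma strictAntiOn_exp_neg_mul_sub_exp_neg_mul (ha : 0 < a) (hab : a < b) :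
    StrictAntiOn (fun u ↦ exp (-a * u) - exp (-b * u)) (Ici (log (b / a) / (b - a))) := by
  refine strictAntiOn_of_deriv_neg (convex_Ici _) (by fun_prop) fun u hu ↦ ?_
  rw [interior_Ici, mem_Ioi, div_lt_iff₀' (sub_pos.2 hab)] at hu
  rw [((hasDerivAt_exp_neg_mul a u).fun_sub (hasDerivAt_exp_neg_mul b u)).deriv]
  linarith [mul_exp_neg_mul_lt_of_log_div_lt ha (ha.trans hab) hu]

lemma strictMonoOn_exp_neg_div_sub_exp_neg_div (ha : 0 < a) (hab : a < b) :
    StrictMonoOn (fun x ↦ exp (-a / x) - exp (-b / x)) (Ioc 0 ((b - a) / log (b / a))) := by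
  have hinv : StrictAntiOn (fun x : ℝ ↦ x⁻¹) (Ioc 0 ((b - a) / log (b / a))) :=
    fun x hx y _ hxy ↦ inv_strictAnti₀ hx.1 hxy
  have hmaps : MapsTo (fun x : ℝ ↦ x⁻¹) (Ioc 0 ((b - a) / log (b / a)))
      (Ici (log (b / a) / (b - a))) := fun x hx ↦ by
    simpa only [mem_Ici, inv_div] using inv_anti₀ hx.1 hx.2
  simpa only [div_eq_mul_inv, Function.comp_def] using
    (strictAntiOn_exp_neg_mul_sub_exp_neg_mul ha hab).comp hinv hmaps

lemma tendsto_exp_neg_div_nhdsGT_zero (hc : 0 < c) :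
    Tendsto (fun x ↦ exp (-c / x)) (𝓝[>] 0) (𝓝 0) := by
  simpa only [div_eq_mul_inv, Function.comp_def] using
    tendsto_exp_atBot.comp (tendsto_inv_nhdsGT_zero.const_mul_atTop_of_neg (neg_lt_zero.2 hc))

lemma log_div_le_sub (ha : 1 ≤ a) (hab : a ≤ b) : log (b / a) ≤ b - a := by
  have ha₀ : 0 < a := one_pos.trans_le ha
  calc log (b / a) ≤ b / a - 1 := log_le_sub_one_of_pos (div_pos (ha₀.trans_le hab) ha₀)
    _ = (b - a) / a := by rw [sub_div, div_self ha₀.ne']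
    _ ≤ b - a := div_le_self (sub_nonneg.2 hab) ha

end ExpDifference

section TimeChange

lemma two_mul_sinh_mul_exp_neg (t : ℝ) : 2 * (sinh t * exp (-t)) = 1 - exp (-2 * t) := by
  have hcancel : exp t * exp (-t) = 1 := by rw [← exp_add, add_neg_cancel, exp_zero]
  have hsq : exp (-2 * t) = exp (-t) * exp (-t) := by rw [← exp_add]; ring_nf
  rw [sinh_eq, hsq]
  linear_combination hcancel

lemma strictMono_two_mul_sinh_mul_exp_neg : StrictMono fun t ↦ 2 * (sinh t * exp (-t)) := by
  intro s t hst
  simp only [two_mul_sinh_mul_exp_neg]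
  gcongr 1 - exp ?_
  linarith

lemma mapsTo_two_mul_sinh_mul_exp_neg :
    MapsTo (fun t ↦ 2 * (sinh t * exp (-t))) (Ioi 0) (Ioo 0 1) := by
  refine fun t (ht : 0 < t) ↦ ⟨by positivity, ?_⟩
  simp only [two_mul_sinh_mul_exp_neg]
  exact sub_lt_self 1 (exp_pos _)

lemma tendsto_two_mul_sinh_mul_exp_neg_nhdsGT_zero :
    Tendsto (fun t ↦ 2 * (sinh t * exp (-t))) (𝓝[>] 0) (𝓝[>] 0) := by
  have hcont : Continuous fun t ↦ 2 * (sinh t * exp (-t)) := by fun_prop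
  simpa using hcont.continuousWithinAt.tendsto_nhdsWithin (x := 0) (t := Ioi 0)
    fun t ht ↦ (mapsTo_two_mul_sinh_mul_exp_neg ht).1

end TimeChange

theorem stmt_2_general (R₁ R₂ : ℝ) (hR₁ : 0 < R₁) (hR₁₂ : R₁ < R₂)
    (hlog : log (R₂ ^ 2 / R₁ ^ 2) ≤ R₂ ^ 2 - R₁ ^ 2)
    (ρ f : ℝ → ℝ)
    (hρ : ∀ t, ρ t = sinh t * exp (-t))
    (hf : ∀ t, f t = exp (-R₁ ^ 2 / (2 * ρ t)) - exp (-R₂ ^ 2 / (2 * ρ t))) :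
    Tendsto f (𝓝[>] 0) (𝓝 0) ∧ StrictMonoOn f (Ioi 0) := by
  have hsq₁ : 0 < R₁ ^ 2 := by positivity
  have hsq : R₁ ^ 2 < R₂ ^ 2 := by gcongr
  have hf_comp : f = (fun x ↦ exp (-R₁ ^ 2 / x) - exp (-R₂ ^ 2 / x)) ∘
      fun t ↦ 2 * (sinh t * exp (-t)) := by
    ext t
    simp only [hf, hρ, Function.comp_apply]
  have hlog_pos : 0 < log (R₂ ^ 2 / R₁ ^ 2) := log_pos ((one_lt_div hsq₁).2 hsq)
  have hrange : Ioo 0 1 ⊆ Ioc 0 ((R₂ ^ 2 - R₁ ^ 2) / log (R₂ ^ 2 / R₁ ^ 2)) :=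
    fun x hx ↦ ⟨hx.1, hx.2.le.trans ((one_le_div hlog_pos).2 hlog)⟩
  rw [hf_comp]
  constructor
  · have hlim := (tendsto_exp_neg_div_nhdsGT_zero hsq₁).sub
      (tendsto_exp_neg_div_nhdsGT_zero (hsq₁.trans hsq))
    rw [sub_zero] at hlim
    exact hlim.comp tendsto_two_mul_sinh_mul_exp_neg_nhdsGT_zero
  · exact (strictMonoOn_exp_neg_div_sub_exp_neg_div hsq₁ hsq).comp
      (strictMono_two_mul_sinh_mul_exp_neg.strictMonoOn _)
      (mapsTo_two_mul_sinh_mul_exp_neg.mono_right hrange)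

theorem stmt_2 (R₁ R₂ : ℝ) (hR₁ : 1 ≤ R₁) (hR₁₂ : R₁ < R₂)
    (ρ f : ℝ → ℝ)
    (hρ : ∀ t, ρ t = Real.sinh t * Real.exp (-t))
    (hf : ∀ t, f t = Real.exp (-R₁ ^ 2 / (2 * ρ t)) - Real.exp (-R₂ ^ 2 / (2 * ρ t))) :
    Tendsto f (nhdsWithin 0 (Set.Ioi 0)) (nhds 0) ∧
    StrictMonoOn f (Set.Ioi 0) :=
  stmt_2_general R₁ R₂ (by positivity) hR₁₂
    (log_div_le_sub (one_le_pow₀ hR₁) (by gcongr)) ρ f hρ hf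
end

section
/- Fix T > 0 and R₂ > 0, and let ρ(t) = sinh(t)·sinh(T−t)/sinh(T) for t ∈ (0, T). Then the function P(t) = 1 − exp(−R₂²/(2ρ(t))) is monotone decreasing on (0, T/2] and monotone increasing on [T/2, T), P(t) → 1 as t → 0⁺ and as t → T⁻, and P attains its minimum over (0, T) at t = T/2, with value 1 − exp(−R₂²·sinh(T)/(2·sinh(T/2)²)). -/
open Real Filter Set

/-!
The probability `P` is a decreasing function of the width `ρ`, tending to `1` as the width
vanishes. By the product-to-sum formula for `sinh`, the width is itself a decreasing function of
the distance `|t - T / 2|` to the midpoint, and it vanishes at both endpoints.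
-/

open scoped Topology

/-- The width parameter `ρ(t)` of the Bernstein loop of the harmonic potential on `[0, T]`: the
planar position at time `t` has density proportional to `x ↦ exp (-‖x‖² / (2 ρ(t)))`. -/
noncomputable def loopWidth (T t : ℝ) : ℝ :=
  sinh t * sinh (T - t) / sinh T

/-- The mass which the centered isotropic Gaussian on the plane with variance `w` in each
coordinate gives to the disk of radius `R` around the origin, in the closed form obtained in polar
coordinates. It is meant for `w > 0`; division by zero makes it `0` at `w = 0`. -/
noncomputable def gaussianDiskMass (R w : ℝ) : ℝ :=
  1 - exp (-R ^ 2 / (2 * w))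

section GaussianDiskMass

variable {R : ℝ}

theorem antitoneOn_gaussianDiskMass : AntitoneOn (gaussianDiskMass R) (Ioi 0) := by
  intro v (hv : 0 < v) w _ hvw
  have h_div : R ^ 2 / (2 * w) ≤ R ^ 2 / (2 * v) := by gcongr
  simp only [gaussianDiskMass, neg_div]
  gcongr

theorem tendsto_gaussianDiskMass_nhdsGT_zero (hR : R ≠ 0) :
    Tendsto (gaussianDiskMass R) (𝓝[>] 0) (𝓝 1) := by
  have h_exponent : Tendsto (fun w ↦ R ^ 2 / 2 * w⁻¹) (𝓝[>] 0) atTop :=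
    tendsto_inv_nhdsGT_zero.const_mul_atTop (by positivity)
  have h_mass := (tendsto_exp_neg_atTop_nhds_zero.comp h_exponent).const_sub 1
  rw [sub_zero] at h_mass
  refine h_mass.congr fun w ↦ ?_
  simp only [gaussianDiskMass, Function.comp_apply]
  ring_nf

end GaussianDiskMass

theorem sinh_mul_sinh (x y : ℝ) : sinh x * sinh y = (cosh (x + y) - cosh (x - y)) / 2 := by
  rw [cosh_add, cosh_sub]
  ring

section LoopWidth

variable {T s t : ℝ}

theorem loopWidth_reflect (T t : ℝ) : loopWidth T (T - t) = loopWidth T t := by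
  rw [loopWidth, loopWidth, sub_sub_cancel, mul_comm]

theorem loopWidth_midpoint (T : ℝ) : loopWidth T (T / 2) = sinh (T / 2) ^ 2 / sinh T := by
  rw [loopWidth, sub_half, sq]

theorem loopWidth_pos (ht : t ∈ Ioo 0 T) : 0 < loopWidth T t := by
  have h_left : 0 < sinh t := sinh_pos_iff.2 ht.1
  have h_right : 0 < sinh (T - t) := sinh_pos_iff.2 (sub_pos.2 ht.2)
  have h_total : 0 < sinh T := sinh_pos_iff.2 (ht.1.trans ht.2)
  exact div_pos (mul_pos h_left h_right) h_total

theorem loopWidth_eq_cosh_sub_cosh (T t : ℝ) :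
    loopWidth T t = (cosh T - cosh (2 * (t - T / 2))) / (2 * sinh T) := by
  have h_sum : t + (T - t) = T := by ring
  have h_diff : t - (T - t) = 2 * (t - T / 2) := by ring
  rw [loopWidth, sinh_mul_sinh, h_sum, h_diff, div_div]

theorem loopWidth_le_loopWidth_iff (hT : 0 < T) :
    loopWidth T s ≤ loopWidth T t ↔ |t - T / 2| ≤ |s - T / 2| := by
  have h_sinh : 0 < 2 * sinh T := mul_pos two_pos (sinh_pos_iff.2 hT)
  rw [loopWidth_eq_cosh_sub_cosh, loopWidth_eq_cosh_sub_cosh, div_le_div_iff_of_pos_right h_sinh,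
    sub_le_sub_iff_left, cosh_le_cosh, abs_mul, abs_mul, mul_le_mul_iff_right₀ (by positivity)]

theorem monotoneOn_loopWidth (hT : 0 < T) : MonotoneOn (loopWidth T) (Iic (T / 2)) :=
  fun _ _ _ ht hst ↦ (loopWidth_le_loopWidth_iff hT).2 <|
    abs_le_abs_of_nonpos (sub_nonpos.2 ht) (sub_le_sub_right hst _)

theorem antitoneOn_loopWidth (hT : 0 < T) : AntitoneOn (loopWidth T) (Ici (T / 2)) :=
  fun _ hs _ _ hst ↦ (loopWidth_le_loopWidth_iff hT).2 <|
    abs_le_abs_of_nonneg (sub_nonneg.2 hs) (sub_le_sub_right hst _)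

theorem loopWidth_le_midpoint (hT : 0 < T) (t : ℝ) : loopWidth T t ≤ loopWidth T (T / 2) :=
  (loopWidth_le_loopWidth_iff hT).2 <| by
    rw [sub_self, abs_zero]
    exact abs_nonneg _

theorem tendsto_loopWidth_nhdsGT_zero (hT : 0 < T) :
    Tendsto (loopWidth T) (𝓝[>] 0) (𝓝[>] 0) := by
  have h_cont : Continuous (loopWidth T) := by
    unfold loopWidth
    fun_prop
  have h_zero : loopWidth T 0 = 0 := by simp [loopWidth]
  refine tendsto_nhdsWithin_iff.2 ⟨?_, ?_⟩
  · exact (h_cont.tendsto' 0 0 h_zero).mono_left nhdsWithin_le_nhds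
  · filter_upwards [Ioo_mem_nhdsGT hT] with t ht using loopWidth_pos ht

theorem tendsto_loopWidth_nhdsLT (hT : 0 < T) :
    Tendsto (loopWidth T) (𝓝[<] T) (𝓝[>] 0) := by
  have h_reflect : Tendsto (fun t ↦ T - t) (𝓝[<] T) (𝓝[>] 0) := by
    refine tendsto_nhdsWithin_iff.2 ⟨?_, ?_⟩
    · exact ((continuous_sub_left T).tendsto' T 0 (sub_self T)).mono_left nhdsWithin_le_nhds
    · filter_upwards [self_mem_nhdsWithin] with t (ht : t < T) using sub_pos.2 ht
  exact ((tendsto_loopWidth_nhdsGT_zero hT).comp h_reflect).congr (loopWidth_reflect T)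

end LoopWidth

theorem stmt_3 (T R₂ : ℝ) (hT : 0 < T) (hR₂ : 0 < R₂)
    (ρ P : ℝ → ℝ)
    (hρ : ∀ t, ρ t = Real.sinh t * Real.sinh (T - t) / Real.sinh T)
    (hP : ∀ t, P t = 1 - Real.exp (-R₂ ^ 2 / (2 * ρ t))) :
    AntitoneOn P (Set.Ioc 0 (T / 2)) ∧
    MonotoneOn P (Set.Ico (T / 2) T) ∧
    Tendsto P (nhdsWithin 0 (Set.Ioi 0)) (nhds 1) ∧
    Tendsto P (nhdsWithin T (Set.Iio T)) (nhds 1) ∧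
    (∀ t ∈ Set.Ioo 0 T, P (T / 2) ≤ P t) ∧
    P (T / 2) = 1 - Real.exp (-R₂ ^ 2 * Real.sinh T / (2 * Real.sinh (T / 2) ^ 2)) := by
  obtain rfl : ρ = loopWidth T := funext hρ
  obtain rfl : P = gaussianDiskMass R₂ ∘ loopWidth T := funext hP
  have h_half : T / 2 < T := half_lt_self hT
  have h_limit := tendsto_gaussianDiskMass_nhdsGT_zero hR₂.ne'
  refine ⟨?_, ?_, ?_, ?_, ?_, ?_⟩
  · exact antitoneOn_gaussianDiskMass.comp_MonotoneOn
      ((monotoneOn_loopWidth hT).mono Ioc_subset_Iic_self)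
      fun t ht ↦ loopWidth_pos ⟨ht.1, ht.2.trans_lt h_half⟩
  · exact antitoneOn_gaussianDiskMass.comp
      ((antitoneOn_loopWidth hT).mono Ico_subset_Ici_self)
      fun t ht ↦ loopWidth_pos ⟨(half_pos hT).trans_le ht.1, ht.2⟩
  · exact h_limit.comp (tendsto_loopWidth_nhdsGT_zero hT)
  · exact h_limit.comp (tendsto_loopWidth_nhdsLT hT)
  · exact fun t ht ↦ antitoneOn_gaussianDiskMass (loopWidth_pos ht)
      (loopWidth_pos ⟨half_pos hT, h_half⟩) (loopWidth_le_midpoint hT t)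
  · rw [Function.comp_apply, loopWidth_midpoint, gaussianDiskMass, mul_div_assoc',
      div_div_eq_mul_div]
end

section
/- Fix T > 0 and R₁, R₂ with 1 ≤ R₁ < R₂, and let ρ(t) = sinh(t)·sinh(T−t)/sinh(T) for t ∈ (0, T). Define f(t) = exp(−R₁²/(2ρ(t))) − exp(−R₂²/(2ρ(t))). Then f(t) → 0 as t → 0⁺ and as t → T⁻, f is monotone increasing on (0, T/2] and monotone decreasing on [T/2, T), and f attains its maximum over (0, T) at t = T/2, with value exp(−R₁²·sinh(T)/(2·sinh(T/2)²)) − exp(−R₂²·sinh(T)/(2·sinh(T/2)²)). -/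
open Real Filter Set

/-!
The mass `exp (-R₁² / (2v)) - exp (-R₂² / (2v))` which a planar centred Gaussian of variance `v` per
coordinate gives to the annulus tends to `0` as `v → 0⁺`, and it increases with `v` as long as `2v`
is at most the logarithmic mean `L` of `R₁²` and `R₂²`. Since `sinh t * sinh (T - t)` equals
`(cosh T - cosh (T - 2t)) / 2`, the variance of the loop only depends on `|T - 2t|`, vanishes at
both ends and peaks at `t = T / 2`, where its double is `tanh (T / 2)`. Hence `tanh (T / 2) ≤ L`
suffices; when `1 ≤ R₁` it follows from `tanh (T / 2) < 1 ≤ R₁² ≤ L`.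
-/

section ExpDifference

variable {a b : ℝ}

lemma mul_exp_neg_mul_le_mul_exp_neg_mul (ha : 0 < a) (hb : 0 < b) {s : ℝ}
    (hs : log (b / a) ≤ (b - a) * s) :
    b * exp (-b * s) ≤ a * exp (-a * s) := by
  have hratio : b / a ≤ exp ((b - a) * s) := (log_le_iff_le_exp (div_pos hb ha)).1 hs
  calc b * exp (-b * s) ≤ a * exp ((b - a) * s) * exp (-b * s) := by
        gcongr
        exact (div_le_iff₀' ha).1 hratio
    _ = a * exp (-a * s) := by
        rw [mul_assoc, ← exp_add]
        ring_nf

lemma antitoneOn_exp_neg_mul_sub_exp_neg_mul (ha : 0 < a) (hab : a < b) :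
    AntitoneOn (fun s => exp (-a * s) - exp (-b * s)) (Ici (log (b / a) / (b - a))) := by
  have hderiv (s : ℝ) : HasDerivAt (fun s => exp (-a * s) - exp (-b * s))
      (exp (-a * s) * (-a) - exp (-b * s) * (-b)) s := by
    simpa only [id, mul_one] using ((hasDerivAt_id s).const_mul (-a)).exp.fun_sub
      ((hasDerivAt_id s).const_mul (-b)).exp
  refine antitoneOn_of_hasDerivWithinAt_nonpos (convex_Ici _)
    (fun s _ => (hderiv s).continuousAt.continuousWithinAt)
    (fun s _ => (hderiv s).hasDerivWithinAt) fun s hs => ?_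
  have hlog : log (b / a) ≤ (b - a) * s :=
    (div_le_iff₀' (sub_pos.2 hab)).1 (interior_subset hs)
  linarith [mul_exp_neg_mul_le_mul_exp_neg_mul ha (ha.trans hab) hlog]

lemma le_sub_div_log_div (ha : 0 < a) (hab : a < b) : a ≤ (b - a) / log (b / a) := by
  have hlog_pos : 0 < log (b / a) := log_pos ((one_lt_div ha).2 hab)
  rw [le_div_iff₀ hlog_pos]
  calc a * log (b / a) ≤ a * (b / a - 1) := by
        gcongr
        exact log_le_sub_one_of_pos (div_pos (ha.trans hab) ha)
    _ = b - a := by field_simp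

end ExpDifference

section GaussianAnnulus

variable {R₁ R₂ : ℝ}

/-- The mass of the annulus `R₁ ≤ |x| < R₂` under the centred Gaussian law on the plane with
covariance matrix `v • 1`, in closed form (integrate in polar coordinates); meaningful for
`0 < v`. -/
noncomputable def gaussianAnnulusMass (R₁ R₂ v : ℝ) : ℝ :=
  exp (-R₁ ^ 2 / (2 * v)) - exp (-R₂ ^ 2 / (2 * v))

lemma tendsto_exp_neg_sq_div_nhdsGT_zero {R : ℝ} (hR : R ≠ 0) :
    Tendsto (fun v => exp (-R ^ 2 / (2 * v))) (nhdsWithin 0 (Ioi 0)) (nhds 0) := by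
  have hexponent : Tendsto (fun v : ℝ => -R ^ 2 / 2 * v⁻¹) (nhdsWithin 0 (Ioi 0)) atBot :=
    tendsto_inv_nhdsGT_zero.const_mul_atTop_of_neg (by linarith [sq_pos_of_ne_zero hR])
  refine (tendsto_exp_atBot.comp hexponent).congr fun v => ?_
  rw [Function.comp_apply, ← div_eq_mul_inv, div_div]

lemma tendsto_gaussianAnnulusMass_nhdsGT_zero (hR₁ : R₁ ≠ 0) (hR₂ : R₂ ≠ 0) :
    Tendsto (gaussianAnnulusMass R₁ R₂) (nhdsWithin 0 (Ioi 0)) (nhds 0) := by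
  unfold gaussianAnnulusMass
  simpa only [sub_zero] using (tendsto_exp_neg_sq_div_nhdsGT_zero hR₁).sub
    (tendsto_exp_neg_sq_div_nhdsGT_zero hR₂)

lemma monotoneOn_gaussianAnnulusMass (hR₁ : 0 < R₁) (hR : R₁ < R₂) :
    MonotoneOn (gaussianAnnulusMass R₁ R₂)
      (Ioc 0 ((R₂ ^ 2 - R₁ ^ 2) / log (R₂ ^ 2 / R₁ ^ 2) / 2)) := by
  have hsq_pos : 0 < R₁ ^ 2 := by positivity
  have hsq : R₁ ^ 2 < R₂ ^ 2 := by gcongr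
  have hmaps : ∀ v ∈ Ioc 0 ((R₂ ^ 2 - R₁ ^ 2) / log (R₂ ^ 2 / R₁ ^ 2) / 2),
      (2 * v)⁻¹ ∈ Ici (log (R₂ ^ 2 / R₁ ^ 2) / (R₂ ^ 2 - R₁ ^ 2)) := fun v hv => by
    rw [mem_Ici, ← inv_div]
    exact inv_anti₀ (by linarith [hv.1]) (by linarith [hv.2])
  intro v hv w hw hvw
  have hinv : (2 * w)⁻¹ ≤ (2 * v)⁻¹ := inv_anti₀ (by linarith [hv.1]) (by linarith)
  simpa only [gaussianAnnulusMass, div_eq_mul_inv] using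
    antitoneOn_exp_neg_mul_sub_exp_neg_mul hsq_pos hsq (hmaps w hw) (hmaps v hv) hinv

end GaussianAnnulus

section LoopVariance

variable {T : ℝ}

/-- The variance at time `t` of each coordinate of the Bernstein loop of length `T` for the
harmonic potential, written `ρ(t)` in the theorem; meaningful for `t ∈ [0, T]` with `0 < T`. -/
noncomputable def loopVariance (T t : ℝ) : ℝ :=
  sinh t * sinh (T - t) / sinh T

lemma loopVariance_eq_cosh_sub_cosh (T t : ℝ) :
    loopVariance T t = (cosh T - cosh (T - 2 * t)) / (2 * sinh T) := by
  have hadd : cosh T = cosh (T - t) * cosh t + sinh (T - t) * sinh t := by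
    rw [← cosh_add, sub_add_cancel]
  have hsub : cosh (T - 2 * t) = cosh (T - t) * cosh t - sinh (T - t) * sinh t := by
    rw [← cosh_sub]
    ring_nf
  rw [loopVariance, hadd, hsub]
  ring

lemma loopVariance_le_loopVariance_iff (hT : 0 < T) {t u : ℝ} :
    loopVariance T t ≤ loopVariance T u ↔ |T - 2 * u| ≤ |T - 2 * t| := by
  have hsinh : 0 < 2 * sinh T := mul_pos two_pos (sinh_pos_iff.2 hT)
  rw [loopVariance_eq_cosh_sub_cosh, loopVariance_eq_cosh_sub_cosh,
    div_le_div_iff_of_pos_right hsinh, sub_le_sub_iff_left, cosh_le_cosh]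

lemma monotoneOn_loopVariance (hT : 0 < T) : MonotoneOn (loopVariance T) (Iic (T / 2)) := by
  intro t (ht : t ≤ T / 2) u (hu : u ≤ T / 2) htu
  rw [loopVariance_le_loopVariance_iff hT, abs_of_nonneg (by linarith),
    abs_of_nonneg (by linarith)]
  linarith

lemma antitoneOn_loopVariance (hT : 0 < T) : AntitoneOn (loopVariance T) (Ici (T / 2)) := by
  intro t (ht : T / 2 ≤ t) u (hu : T / 2 ≤ u) htu
  rw [loopVariance_le_loopVariance_iff hT, abs_of_nonpos (by linarith),
    abs_of_nonpos (by linarith)]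
  linarith

lemma loopVariance_le_loopVariance_half (hT : 0 < T) (t : ℝ) :
    loopVariance T t ≤ loopVariance T (T / 2) := by
  rw [loopVariance_le_loopVariance_iff hT, mul_div_cancel₀ T two_ne_zero, sub_self, abs_zero]
  exact abs_nonneg _

lemma loopVariance_half (T : ℝ) : loopVariance T (T / 2) = sinh (T / 2) ^ 2 / sinh T := by
  rw [loopVariance, sub_half, sq]

lemma loopVariance_half_eq_tanh (T : ℝ) : loopVariance T (T / 2) = tanh (T / 2) / 2 := by
  have hdouble : sinh T = 2 * sinh (T / 2) * cosh (T / 2) := by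
    rw [← sinh_two_mul, mul_div_cancel₀ T two_ne_zero]
  rw [loopVariance_half, hdouble, tanh_eq_sinh_div_cosh]
  rcases eq_or_ne (sinh (T / 2)) 0 with hzero | hne
  · simp [hzero]
  · field_simp

lemma loopVariance_pos {t : ℝ} (ht : t ∈ Ioo 0 T) : 0 < loopVariance T t :=
  div_pos (mul_pos (sinh_pos_iff.2 ht.1) (sinh_pos_iff.2 (sub_pos.2 ht.2)))
    (sinh_pos_iff.2 (ht.1.trans ht.2))

lemma continuous_loopVariance (T : ℝ) : Continuous (loopVariance T) := by
  unfold loopVariance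
  fun_prop

lemma tendsto_loopVariance_nhdsGT_zero (hT : 0 < T) :
    Tendsto (loopVariance T) (nhdsWithin 0 (Ioi 0)) (nhdsWithin 0 (Ioi 0)) := by
  refine tendsto_nhdsWithin_iff.2 ⟨?_, ?_⟩
  · have hzero : loopVariance T 0 = 0 := by simp [loopVariance]
    simpa only [hzero] using ((continuous_loopVariance T).tendsto 0).mono_left nhdsWithin_le_nhds
  · filter_upwards [Ioo_mem_nhdsGT hT] with t ht using loopVariance_pos ht

lemma tendsto_loopVariance_nhdsLT (hT : 0 < T) :
    Tendsto (loopVariance T) (nhdsWithin T (Iio T)) (nhdsWithin 0 (Ioi 0)) := by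
  refine tendsto_nhdsWithin_iff.2 ⟨?_, ?_⟩
  · have hzero : loopVariance T T = 0 := by simp [loopVariance]
    simpa only [hzero] using ((continuous_loopVariance T).tendsto T).mono_left nhdsWithin_le_nhds
  · filter_upwards [Ioo_mem_nhdsLT hT] with t ht using loopVariance_pos ht

end LoopVariance

lemma gaussianAnnulusMass_loopVariance_half (T R₁ R₂ : ℝ) :
    gaussianAnnulusMass R₁ R₂ (loopVariance T (T / 2)) =
      exp (-R₁ ^ 2 * sinh T / (2 * sinh (T / 2) ^ 2)) -
        exp (-R₂ ^ 2 * sinh T / (2 * sinh (T / 2) ^ 2)) := by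
  rw [gaussianAnnulusMass, loopVariance_half, ← mul_div_assoc]
  simp only [div_div_eq_mul_div]

theorem stmt_4_general (T R₁ R₂ : ℝ) (hT : 0 < T) (hR₁ : 0 < R₁) (hR₁₂ : R₁ < R₂)
    (hlogMean : tanh (T / 2) ≤ (R₂ ^ 2 - R₁ ^ 2) / log (R₂ ^ 2 / R₁ ^ 2))
    (ρ f : ℝ → ℝ)
    (hρ : ∀ t, ρ t = sinh t * sinh (T - t) / sinh T)
    (hf : ∀ t, f t = exp (-R₁ ^ 2 / (2 * ρ t)) - exp (-R₂ ^ 2 / (2 * ρ t))) :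
    Tendsto f (nhdsWithin 0 (Ioi 0)) (nhds 0) ∧
    Tendsto f (nhdsWithin T (Iio T)) (nhds 0) ∧
    MonotoneOn f (Ioc 0 (T / 2)) ∧
    AntitoneOn f (Ico (T / 2) T) ∧
    (∀ t ∈ Ioo 0 T, f t ≤ f (T / 2)) ∧
    f (T / 2) = exp (-R₁ ^ 2 * sinh T / (2 * sinh (T / 2) ^ 2)) -
      exp (-R₂ ^ 2 * sinh T / (2 * sinh (T / 2) ^ 2)) := by
  obtain rfl : ρ = loopVariance T := funext hρ
  obtain rfl : f = gaussianAnnulusMass R₁ R₂ ∘ loopVariance T := funext hf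
  have hlim := tendsto_gaussianAnnulusMass_nhdsGT_zero hR₁.ne' (hR₁.trans hR₁₂).ne'
  have hmono := monotoneOn_gaussianAnnulusMass hR₁ hR₁₂
  have hmaps : MapsTo (loopVariance T) (Ioo 0 T)
      (Ioc 0 ((R₂ ^ 2 - R₁ ^ 2) / log (R₂ ^ 2 / R₁ ^ 2) / 2)) := fun t ht =>
    ⟨loopVariance_pos ht, by
      linarith [loopVariance_le_loopVariance_half hT t, loopVariance_half_eq_tanh T]⟩
  have hhalf : T / 2 ∈ Ioo 0 T := ⟨half_pos hT, half_lt_self hT⟩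
  exact ⟨hlim.comp (tendsto_loopVariance_nhdsGT_zero hT),
    hlim.comp (tendsto_loopVariance_nhdsLT hT),
    hmono.comp ((monotoneOn_loopVariance hT).mono Ioc_subset_Iic_self)
      (hmaps.mono_left (Ioc_subset_Ioo_right hhalf.2)),
    hmono.comp_AntitoneOn ((antitoneOn_loopVariance hT).mono Ico_subset_Ici_self)
      (hmaps.mono_left (Ico_subset_Ioo_left hhalf.1)),
    fun t ht => hmono (hmaps ht) (hmaps hhalf) (loopVariance_le_loopVariance_half hT t),
    gaussianAnnulusMass_loopVariance_half T R₁ R₂⟩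

theorem stmt_4 (T R₁ R₂ : ℝ) (hT : 0 < T) (hR₁ : 1 ≤ R₁) (hR₁₂ : R₁ < R₂)
    (ρ f : ℝ → ℝ)
    (hρ : ∀ t, ρ t = Real.sinh t * Real.sinh (T - t) / Real.sinh T)
    (hf : ∀ t, f t = Real.exp (-R₁ ^ 2 / (2 * ρ t)) - Real.exp (-R₂ ^ 2 / (2 * ρ t))) :
    Tendsto f (nhdsWithin 0 (Set.Ioi 0)) (nhds 0) ∧
    Tendsto f (nhdsWithin T (Set.Iio T)) (nhds 0) ∧
    MonotoneOn f (Set.Ioc 0 (T / 2)) ∧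
    AntitoneOn f (Set.Ico (T / 2) T) ∧
    (∀ t ∈ Set.Ioo 0 T, f t ≤ f (T / 2)) ∧
    f (T / 2) = Real.exp (-R₁ ^ 2 * Real.sinh T / (2 * Real.sinh (T / 2) ^ 2)) -
      Real.exp (-R₂ ^ 2 * Real.sinh T / (2 * Real.sinh (T / 2) ^ 2)) := by
  have hpos : 0 < R₁ := one_pos.trans_le hR₁
  have hlogMean := le_sub_div_log_div (pow_pos hpos 2) (pow_lt_pow_left₀ hR₁₂ hpos.le two_ne_zero)
  exact stmt_4_general T R₁ R₂ hT hpos hR₁₂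
    ((tanh_lt_one _).le.trans ((one_le_pow₀ hR₁).trans hlogMean)) ρ f hρ hf
end

section
/- Let d ≥ 1, T > 0, 0 < t ≤ T, x ∈ ℝ^d, and set N = exp(dT/4). Then [N·(2π·sinh(t))^{−d/2}·exp(−coth(t)·|x|²/2)] · [N·exp(−(|x|² + d(T−t))/2)] = (2π·ρ(t))^{−d/2}·exp(−|x|²/(2ρ(t))), where ρ(t) = sinh(t)·e^{−t}. -/
/-!
Both factors are Gaussian in `x`, so their product is again Gaussian, and the identity
`coth t + 1 = 1 / (sinh t * exp (-t))` identifies its width as `ρ t`. The constants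
`N ^ 2 * exp (-d * (T - t) / 2)` collapse to `exp (d * t / 2)`, independently of `T`: exactly the
factor that turns `(2 * π * sinh t) ^ (-d / 2)` into `(2 * π * ρ t) ^ (-d / 2)`.
-/

open Real

theorem cosh_div_sinh_add_one {t : ℝ} (ht : t ≠ 0) :
    cosh t / sinh t + 1 = (sinh t * exp (-t))⁻¹ := by
  have hsinh : sinh t ≠ 0 := sinh_ne_zero.mpr ht
  calc
    cosh t / sinh t + 1 = (cosh t + sinh t) / sinh t := by rw [add_div, div_self hsinh]
    _ = exp t / sinh t := by rw [cosh_add_sinh]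
    _ = (sinh t * exp (-t))⁻¹ := by rw [mul_inv, exp_neg, inv_inv, div_eq_inv_mul]

theorem exp_neg_coth_mul_exp_neg_half {t : ℝ} (ht : t ≠ 0) (q : ℝ) :
    exp (-(cosh t / sinh t) * q / 2) * exp (-q / 2) = exp (-q / (2 * (sinh t * exp (-t)))) := by
  rw [← exp_add]
  congr 1
  calc
    -(cosh t / sinh t) * q / 2 + -q / 2 = -q / 2 * (cosh t / sinh t + 1) := by ring
    _ = -q / 2 * (sinh t * exp (-t))⁻¹ := by rw [cosh_div_sinh_add_one ht]
    _ = -q / (2 * (sinh t * exp (-t))) := by rw [← div_eq_mul_inv, div_div]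

theorem mul_exp_rpow {c : ℝ} (hc : 0 ≤ c) (s p : ℝ) :
    (c * exp s) ^ p = c ^ p * exp (s * p) := by
  rw [mul_rpow hc (exp_pos s).le, ← exp_mul]

theorem stmt_12_general (d T q : ℝ) {t : ℝ} (ht : 0 < t) :
    (exp (d * T / 4) * (2 * π * sinh t) ^ (-d / 2) * exp (-(cosh t / sinh t) * q / 2)) *
      (exp (d * T / 4) * exp (-(q + d * (T - t)) / 2)) =
    (2 * π * (sinh t * exp (-t))) ^ (-d / 2) * exp (-q / (2 * (sinh t * exp (-t)))) := by
  have hbase : 0 ≤ 2 * π * sinh t := mul_nonneg two_pi_pos.le (sinh_pos_iff.mpr ht).le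
  have hsplit : exp (-(q + d * (T - t)) / 2) = exp (-q / 2) * exp (-d * (T - t) / 2) := by
    rw [← exp_add]
    ring_nf
  have hconst : exp (d * T / 4) * exp (d * T / 4) * exp (-d * (T - t) / 2) =
      exp (-t * (-d / 2)) := by
    rw [← exp_add, ← exp_add]
    ring_nf
  calc
    _ = (2 * π * sinh t) ^ (-d / 2) *
          (exp (d * T / 4) * exp (d * T / 4) * exp (-d * (T - t) / 2)) *
          (exp (-(cosh t / sinh t) * q / 2) * exp (-q / 2)) := by
      rw [hsplit]
      ring
    _ = (2 * π * sinh t) ^ (-d / 2) * exp (-t * (-d / 2)) *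
          exp (-q / (2 * (sinh t * exp (-t)))) := by
      rw [hconst, exp_neg_coth_mul_exp_neg_half ht.ne']
    _ = _ := by rw [← mul_exp_rpow hbase, mul_assoc (2 * π)]

theorem stmt_12 (d : ℕ) (hd : 1 ≤ d) (T t : ℝ) (hT : 0 < T) (ht : 0 < t) (htT : t ≤ T)
    (x : EuclideanSpace ℝ (Fin d))
    (N : ℝ) (hN : N = Real.exp ((d : ℝ) * T / 4))
    (ρ : ℝ → ℝ) (hρ : ∀ s, ρ s = Real.sinh s * Real.exp (-s)) :
    (N * (2 * Real.pi * Real.sinh t) ^ (-(d : ℝ) / 2) *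
        Real.exp (-(Real.cosh t / Real.sinh t) * ‖x‖ ^ 2 / 2)) *
      (N * Real.exp (-(‖x‖ ^ 2 + (d : ℝ) * (T - t)) / 2)) =
    (2 * Real.pi * ρ t) ^ (-(d : ℝ) / 2) * Real.exp (-‖x‖ ^ 2 / (2 * ρ t)) := by
  rw [hN, hρ]
  exact stmt_12_general d T (‖x‖ ^ 2) ht
end

section
/- Let d ≥ 1, M > 0, and let a, b : ℕ^d → ℝ be families with |a_n| ≤ M and |b_n| ≤ M for all n ∈ ℕ^d, and with a₀ > 0 and b₀ > 0 (where 0 denotes the zero multi-index). For n ∈ ℕ^d set E_n = n₁ + ⋯ + n_d + d/2, and for T > 0 let 𝒩² = e^{T·d/2}/(a₀·b₀), so that 𝒩 = (a₀·b₀)^{−1/2}·e^{T·E₀/2} is the unique positive solution of 𝒩²·a₀·e^{−T·E₀}·b₀ = 1. Then for every T > 0 the family (a_n·e^{−T·E_n}·b_n)_{n ∈ ℕ^d} is summable and |𝒩²·∑_{n ∈ ℕ^d, n ≠ 0} a_n·e^{−T·E_n}·b_n| ≤ (M²/(a₀·b₀))·d·e^{−T}·(1 − e^{−T})^{−d}; consequently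 𝒩²·∑_{n ∈ ℕ^d} a_n·e^{−T·E_n}·b_n = 1 + O(e^{−T}) as T → +∞. -/
open Real Filter Asymptotics

/-!
Since `E n = E 0 + ∑ j, n j` and `𝒩 T ^ 2 = exp (T * E 0) / (a 0 * b 0)`, the normalized family
`𝒩 T ^ 2 * (a n * exp (-T * E n) * b n)` is the family of terms `r ^ (∑ j, n j) * c n` of a power
series in `d` variables, all set equal to `r = exp (-T)`. Its coefficients
`c n = a n * b n / (a 0 * b 0)` are bounded and `c 0 = 1`. The tail is dominated by that of a
product of `d` geometric series, namely `(1 - r) ^ (-d) - 1 ≤ d * r * (1 - r) ^ (-d)` by Bernoulli's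
inequality.
-/

open scoped Topology

theorem hasSum_prod_piFin_of_nonneg {d : ℕ} {β : Fin d → Type*} {f : ∀ i, β i → ℝ}
    {s : Fin d → ℝ} (hf : ∀ i x, 0 ≤ f i x) (hs : ∀ i, HasSum (f i) (s i)) :
    HasSum (fun x : ∀ i, β i => ∏ i, f i (x i)) (∏ i, s i) := by
  induction d with
  | zero => simp
  | succ d ih =>
    have htail := ih (fun i => hf i.succ) fun i => hs i.succ
    have hhead_nonneg : 0 ≤ f 0 := hf 0
    have htail_nonneg : 0 ≤ fun x : ∀ i : Fin d, β i.succ => ∏ i, f i.succ (x i) :=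
      fun x => Finset.prod_nonneg fun i _ => hf i.succ (x i)
    have hsummable := (hs 0).summable.mul_of_nonneg htail.summable hhead_nonneg htail_nonneg
    have hmul := (hs 0).mul htail hsummable
    rw [← (Fin.consEquiv β).hasSum_iff, Fin.prod_univ_succ]
    simpa [Function.comp_def, Fin.consEquiv, Fin.prod_univ_succ] using hmul

theorem hasSum_prod_pi_of_nonneg {ι : Type*} [Fintype ι] {β : ι → Type*} {f : ∀ i, β i → ℝ}
    {s : ι → ℝ} (hf : ∀ i x, 0 ≤ f i x) (hs : ∀ i, HasSum (f i) (s i)) :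
    HasSum (fun x : ∀ i, β i => ∏ i, f i (x i)) (∏ i, s i) := by
  let e := (Fintype.equivFin ι).symm
  rw [← e.prod_comp, ← (Equiv.piCongrLeft β e).hasSum_iff]
  refine (hasSum_prod_piFin_of_nonneg (fun i => hf (e i)) fun i => hs (e i)).congr_fun ?_
  intro x
  simp [← e.prod_comp]

theorem hasSum_geometric_pi_of_lt_one {ι : Type*} [Fintype ι] {r : ℝ} (hr₀ : 0 ≤ r) (hr₁ : r < 1) :
    HasSum (fun n : ι → ℕ => r ^ ∑ i, n i) ((1 - r) ^ Fintype.card ι)⁻¹ := by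
  simpa [Finset.prod_pow_eq_pow_sum] using
    hasSum_prod_pi_of_nonneg (ι := ι) (fun _ k => pow_nonneg hr₀ k)
      fun _ => hasSum_geometric_of_lt_one hr₀ hr₁

theorem hasSum_subtype_ne {α β : Type*} [AddCommGroup α] [TopologicalSpace α]
    [IsTopologicalAddGroup α] {f : β → α} {a : α} (hf : HasSum f a) (b : β) :
    HasSum (fun x : {x // x ≠ b} => f x) (a - f b) := by
  have hb : HasSum (f ∘ (↑) : ({b} : Set β) → α) (f b) := hasSum_unique _
  exact hb.hasSum_compl_iff.2 (by simpa using hf)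

theorem inv_one_sub_pow_sub_one_le {K : Type*} [Field K] [LinearOrder K] [IsStrictOrderedRing K]
    {r : K} (hr : r < 1) (d : ℕ) :
    ((1 - r) ^ d)⁻¹ - 1 ≤ d * r * ((1 - r) ^ d)⁻¹ := by
  have hbernoulli : 1 - d * r ≤ (1 - r) ^ d := by
    simpa [← sub_eq_add_neg] using one_add_mul_le_pow (a := -r) (by linarith) d
  have hpow : 0 < (1 - r) ^ d := pow_pos (sub_pos.2 hr) d
  have hdiv : (1 - d * r) * ((1 - r) ^ d)⁻¹ ≤ 1 :=
    mul_inv_le_one_of_le₀ hbernoulli hpow.le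
  linarith

theorem norm_pow_smul_le {𝕜 F : Type*} [NormedField 𝕜] [SeminormedAddCommGroup F]
    [NormedSpace 𝕜 F] {x : F} {C : ℝ} (hx : ‖x‖ ≤ C) (r : 𝕜) (k : ℕ) :
    ‖r ^ k • x‖ ≤ C * ‖r‖ ^ k := by
  rw [norm_smul, norm_pow, mul_comm]
  gcongr

section PowerSeries

variable {ι 𝕜 F : Type*} [Fintype ι] [NormedField 𝕜] [NormedAddCommGroup F] [NormedSpace 𝕜 F]
  {c : (ι → ℕ) → F} {C : ℝ} {r : 𝕜}

theorem summable_pow_sum_smul [CompleteSpace F] (hc : ∀ n, ‖c n‖ ≤ C) (hr : ‖r‖ < 1) :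
    Summable fun n : ι → ℕ => r ^ (∑ i, n i) • c n :=
  .of_norm_bounded ((hasSum_geometric_pi_of_lt_one (norm_nonneg r) hr).summable.mul_left C)
    fun n => norm_pow_smul_le (hc n) r _

theorem norm_tsum_subtype_ne_zero_pow_sum_smul_le (hc : ∀ n, ‖c n‖ ≤ C) (hr : ‖r‖ < 1) :
    ‖∑' n : {n : ι → ℕ // n ≠ 0}, r ^ (∑ i, n.1 i) • c n‖ ≤
      C * (Fintype.card ι * ‖r‖ * ((1 - ‖r‖) ^ Fintype.card ι)⁻¹) := by
  have hgeom := hasSum_subtype_ne (hasSum_geometric_pi_of_lt_one (ι := ι) (norm_nonneg r) hr) 0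
  have hC : 0 ≤ C := (norm_nonneg _).trans (hc 0)
  calc ‖∑' n : {n : ι → ℕ // n ≠ 0}, r ^ (∑ i, n.1 i) • c n‖
      ≤ C * (((1 - ‖r‖) ^ Fintype.card ι)⁻¹ - 1) := by
        simpa using tsum_of_norm_bounded (hgeom.mul_left C) fun n => norm_pow_smul_le (hc n) r _
    _ ≤ C * (Fintype.card ι * ‖r‖ * ((1 - ‖r‖) ^ Fintype.card ι)⁻¹) := by
        gcongr
        exact inv_one_sub_pow_sub_one_le hr _

theorem norm_tsum_pow_sum_smul_sub_le [CompleteSpace F] (hc : ∀ n, ‖c n‖ ≤ C) (hr : ‖r‖ < 1) :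
    ‖∑' n : ι → ℕ, r ^ (∑ i, n i) • c n - c 0‖ ≤
      C * (Fintype.card ι * ‖r‖ * ((1 - ‖r‖) ^ Fintype.card ι)⁻¹) := by
  have htail := hasSum_subtype_ne (summable_pow_sum_smul hc hr).hasSum 0
  simpa [htail.tsum_eq] using norm_tsum_subtype_ne_zero_pow_sum_smul_le hc hr

theorem isBigO_tsum_pow_sum_smul_sub [CompleteSpace F] (hc : ∀ n, ‖c n‖ ≤ C) :
    (fun r : 𝕜 => ∑' n : ι → ℕ, r ^ (∑ i, n i) • c n - c 0) =O[𝓝 0] fun r => r := by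
  have hball : ∀ᶠ r : 𝕜 in 𝓝 0, ‖r‖ < 1 :=
    continuous_norm.continuousAt.eventually_lt continuousAt_const (by simp)
  have hfactor : (fun r : 𝕜 => C * Fintype.card ι * ((1 - ‖r‖) ^ Fintype.card ι)⁻¹)
      =O[𝓝 0] fun _ => (1 : ℝ) :=
    Tendsto.isBigO_one ℝ (ContinuousAt.tendsto (by fun_prop (disch := simp)))
  have hbound : (fun r : 𝕜 => C * Fintype.card ι * ((1 - ‖r‖) ^ Fintype.card ι)⁻¹ * ‖r‖)
      =O[𝓝 0] fun r => ‖r‖ := by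
    simpa only [one_mul] using hfactor.mul (isBigO_refl (‖·‖) (𝓝 0))
  refine .trans (.of_norm_eventuallyLE ?_) hbound.of_norm_right
  filter_upwards [hball] with r hr
  exact (norm_tsum_pow_sum_smul_sub_le hc hr).trans_eq (by ring)

end PowerSeries

theorem rpow_neg_half_mul_exp_half_sq {p : ℝ} (hp : 0 ≤ p) (s : ℝ) :
    (p ^ (-(1 : ℝ) / 2) * exp (s / 2)) ^ 2 = exp s / p := by
  have hrpow : (p ^ (-(1 : ℝ) / 2)) ^ 2 = p⁻¹ := by
    rw [← rpow_mul_natCast hp, ← rpow_neg_one]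
    norm_num
  have hexp : exp (s / 2) ^ 2 = exp s := by
    rw [← exp_nat_mul]
    ring_nf
  rw [mul_pow, hrpow, hexp, div_eq_inv_mul]

theorem eq_of_sq_mul_eq_one {K : Type*} [Field K] [LinearOrder K] [IsStrictOrderedRing K]
    {x y k : K} (hx : 0 ≤ x) (hy : 0 ≤ y) (hxk : x ^ 2 * k = 1) (hyk : y ^ 2 * k = 1) : x = y :=
  (sq_eq_sq₀ hx hy).1 (mul_right_cancel₀ (right_ne_zero_of_mul_eq_one hxk) (hxk.trans hyk.symm))

theorem exp_mul_div_mul_exp_neg_mul_add (T E₀ p x y : ℝ) (k : ℕ) :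
    exp (T * E₀) / p * (x * exp (-T * (k + E₀)) * y) = exp (-T) ^ k * (x * y / p) := by
  have hexp : exp (-T * (k + E₀)) = exp (-T) ^ k * (exp (T * E₀))⁻¹ := by
    rw [← exp_nat_mul, ← exp_neg, ← exp_add]
    ring_nf
  rw [hexp]
  field_simp

theorem stmt_17 (d : ℕ) (hd : 1 ≤ d) (M : ℝ) (hM : 0 < M)
    (a b : (Fin d → ℕ) → ℝ)
    (ha : ∀ n, |a n| ≤ M) (hb : ∀ n, |b n| ≤ M)
    (ha0 : 0 < a 0) (hb0 : 0 < b 0)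
    (E : (Fin d → ℕ) → ℝ)
    (hE : ∀ n, E n = (∑ j, (n j : ℝ)) + (d : ℝ) / 2)
    (𝒩 : ℝ → ℝ)
    (h𝒩 : ∀ T, 𝒩 T = (a 0 * b 0) ^ (-(1 : ℝ) / 2) * Real.exp (T * E 0 / 2)) :
    (∀ T : ℝ, 0 < T →
      (𝒩 T) ^ 2 = Real.exp (T * (d : ℝ) / 2) / (a 0 * b 0) ∧
      0 < 𝒩 T ∧
      (𝒩 T) ^ 2 * (a 0 * Real.exp (-T * E 0) * b 0) = 1 ∧
      (∀ N : ℝ, 0 < N → N ^ 2 * (a 0 * Real.exp (-T * E 0) * b 0) = 1 → N = 𝒩 T) ∧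
      Summable (fun n : Fin d → ℕ => a n * Real.exp (-T * E n) * b n) ∧
      |(𝒩 T) ^ 2 * ∑' n : {n : Fin d → ℕ // n ≠ 0},
          a n.1 * Real.exp (-T * E n.1) * b n.1| ≤
        M ^ 2 / (a 0 * b 0) *
          ((d : ℝ) * Real.exp (-T) * (1 - Real.exp (-T)) ^ (-(d : ℤ)))) ∧
    (fun T : ℝ =>
        (𝒩 T) ^ 2 * (∑' n : Fin d → ℕ, a n * Real.exp (-T * E n) * b n) - 1)
      =O[atTop] fun T => Real.exp (-T) := by
  have hp : 0 < a 0 * b 0 := mul_pos ha0 hb0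
  have hE0 : E 0 = d / 2 := by simp [hE]
  have hgap (n) : E n = (∑ j, n j : ℕ) + E 0 := by simp [hE]
  have hpos (T) : 0 < 𝒩 T := by rw [h𝒩]; positivity
  have hsq (T) : 𝒩 T ^ 2 = exp (T * E 0) / (a 0 * b 0) := by
    rw [h𝒩, rpow_neg_half_mul_exp_half_sq hp.le]
  have hterm (T n) : 𝒩 T ^ 2 * (a n * exp (-T * E n) * b n) =
      exp (-T) ^ (∑ j, n j) • (a n * b n / (a 0 * b 0)) := by
    rw [hsq, hgap n, exp_mul_div_mul_exp_neg_mul_add, smul_eq_mul]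
  have hone (T) : 𝒩 T ^ 2 * (a 0 * exp (-T * E 0) * b 0) = 1 := by rw [hterm]; simp [hp.ne']
  have hc (n) : ‖a n * b n / (a 0 * b 0)‖ ≤ M ^ 2 / (a 0 * b 0) := by
    rw [norm_div, norm_mul, norm_of_nonneg hp.le, sq]
    gcongr
    exacts [ha n, hb n]
  have hr {T : ℝ} (hT : 0 < T) : ‖exp (-T)‖ < 1 := by simpa
  refine ⟨fun T hT => ⟨by rw [hsq, hE0, mul_div_assoc], hpos T, hone T,
    fun N hN h => eq_of_sq_mul_eq_one hN.le (hpos T).le h (hone T), ?_, ?_⟩, ?_⟩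
  · simpa only [← hterm, summable_mul_left_iff (pow_pos (hpos T) 2).ne'] using
      summable_pow_sum_smul hc (hr hT)
  · simpa [← tsum_mul_left, -neg_mul, hterm] using
      norm_tsum_subtype_ne_zero_pow_sum_smul_le hc (hr hT)
  · simpa [Function.comp_def, ← tsum_mul_left, -neg_mul, hterm, hp.ne'] using
      (isBigO_tsum_pow_sum_smul_sub hc).comp_tendsto tendsto_exp_neg_atTop_nhds_zero
end
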